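/- Let p be an odd prime, Δ an integer not divisible by p, set ε = 1 if the image of Δ in ℤ/pℤ is a square and ε = −1 otherwise, and let k be a natural number. Consider the quadratic form in n = 2k+2 variables B(x₀, x₁, …, x_{2k+1}) = x₀² − Δ·x₁² + ∑_{i=1}^{k} x_{2i}·x_{2i+1}. For natural numbers T and ℓ, let N_{T,ℓ} be the number of v ∈ (ℤ/p^ℓℤ)^n with B(v) equal to the image of p^{2T} in ℤ/p^ℓℤ. Then for all real a, z with |a| < 1 and |z| < 1, setting w = z/p^{k+1}, the double series indexed by (T,ℓ) ∈ ℕ×ℕ with terms a^T · z^ℓ · N_{T,ℓ}/p^{nℓ} converges with sum (1 − ε·w/p)(1 − a²w²) / ((1 − z/p)(1 − a)(1 − a·w²)(1 − ε·a·w)). -/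

import Mathlib

namespace S17

lemma card_comp {G H : Type*} [AddGroup G] [AddGroup H] [Finite G] [Finite H] (f : G →+ H)
    (hf : Function.Surjective f) (P : H → Prop) :
    Nat.card {g // P (f g)} = Nat.card f.ker * Nat.card {h // P h} := by
  classical
  have e := Equiv.sigmaSubtypeFiberEquivSubtype (p := fun g => P (f g)) (q := P) f (fun x => Iff.rfl)
  rw [← Nat.card_congr e]
  have := Fintype.ofFinite {h // P h}
  rw [Nat.card_sigma]
  have h1 : ∀ y : {h // P h}, Nat.card {x // f x = y} = Nat.card f.ker := fun y =>
    Nat.card_congr (AddMonoidHom.fiberEquivKerOfSurjective hf y.1)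
  simp [h1, mul_comm]

lemma card_ker {G H : Type*} [AddGroup G] [AddGroup H] [Finite G] [Finite H] (f : G →+ H)
    (hf : Function.Surjective f) : Nat.card f.ker * Nat.card H = Nat.card G := by
  rw [← AddSubgroup.card_mul_index f.ker, AddSubgroup.index_ker,
    AddMonoidHom.range_eq_top.2 hf, AddSubgroup.card_top]

/-- reduction modulo a divisor, componentwise -/
lemma card_red {n d : ℕ} (hn : n ≠ 0) (hd : d ∣ n) (r : ℕ) (P : (Fin r → ZMod d) → Prop) :
    Nat.card {v : Fin r → ZMod n // P (fun i => ZMod.castHom hd (ZMod d) (v i))}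
      = (n / d) ^ r * Nat.card {v // P v} := by
  have : NeZero n := ⟨hn⟩
  have hd0 : d ≠ 0 := fun h => hn (by subst h; simpa using hd)
  have : NeZero d := ⟨hd0⟩
  let f : (Fin r → ZMod n) →+ (Fin r → ZMod d) :=
    (ZMod.castHom hd (ZMod d)).toAddMonoidHom.compLeft (Fin r)
  have hf : Function.Surjective f := (ZMod.castHom_surjective hd).comp_left
  have h1 := card_comp f hf P
  have h2 := card_ker f hf
  have h3 : Nat.card f.ker = (n / d) ^ r := by
    simp only [Nat.card_fun, Nat.card_zmod, Nat.card_eq_fintype_card (α := Fin r), Fintype.card_fin] at h2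
    obtain ⟨c, rfl⟩ := hd
    rw [Nat.mul_div_cancel_left _ (Nat.pos_of_ne_zero hd0)]
    rw [mul_pow, mul_comm] at h2
    exact Nat.eq_of_mul_eq_mul_left (by positivity) h2
  rw [← h3]; exact h1

lemma card_mul_ker {n : ℕ} (hn : n ≠ 0) (x : ℕ) :
    Nat.card (AddMonoidHom.mulLeft (x : ZMod n)).ker = n.gcd x := by
  have : NeZero n := ⟨hn⟩
  set f := AddMonoidHom.mulLeft (x : ZMod n)
  have h := AddSubgroup.card_mul_index f.ker
  have hr : f.range = AddSubgroup.zmultiples (x : ZMod n) := by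
    ext s
    rw [AddSubgroup.mem_zmultiples_iff, AddMonoidHom.mem_range]
    constructor
    · rintro ⟨y, rfl⟩
      exact ⟨(y.val : ℤ), by simp [f, mul_comm]⟩
    · rintro ⟨k, rfl⟩
      exact ⟨(k : ZMod n), by simp [f, mul_comm]⟩
  rw [AddSubgroup.index_ker, hr, Nat.card_zmultiples, ZMod.addOrderOf_coe _ hn, Nat.card_zmod] at h
  obtain ⟨c, hc⟩ := Nat.gcd_dvd_left n x
  have hg : 0 < n.gcd x := Nat.gcd_pos_of_pos_left _ (Nat.pos_of_ne_zero hn)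
  have hc' : n / n.gcd x = c := Nat.div_eq_of_eq_mul_right hg hc
  rw [hc'] at h
  have hc0 : 0 < c := by
    rcases Nat.eq_zero_or_pos c with h0 | h0
    · subst h0; simp at hc; omega
    · exact h0
  exact Nat.eq_of_mul_eq_mul_right hc0 (h.trans hc)

lemma mul_solvable {n : ℕ} (hn : n ≠ 0) (x : ℕ) (s : ZMod n) :
    (∃ y : ZMod n, x * y = s) ↔ ZMod.castHom (Nat.gcd_dvd_left n x) (ZMod (n.gcd x)) s = 0 := by
  have : NeZero n := ⟨hn⟩
  constructor
  · rintro ⟨y, rfl⟩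
    rw [map_mul, map_natCast, (ZMod.natCast_eq_zero_iff _ _).2 (Nat.gcd_dvd_right n x), zero_mul]
  · intro h
    have hs : s = ((s.val : ℕ) : ZMod n) := by simp
    rw [hs, map_natCast, ZMod.natCast_eq_zero_iff] at h
    obtain ⟨c, hc⟩ := h
    refine ⟨(Nat.gcdB n x : ℤ) * c, ?_⟩
    have hb := congrArg (Int.cast : ℤ → ZMod n) (Nat.gcd_eq_gcd_ab n x)
    push_cast at hb
    rw [ZMod.natCast_self, zero_mul, zero_add] at hb
    rw [← mul_assoc, ← hb, ← Nat.cast_mul, ← hc, hs.symm]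

open Classical in
lemma card_mul_eq {n : ℕ} (hn : n ≠ 0) (x : ℕ) (s : ZMod n) :
    Nat.card {y : ZMod n // x * y = s} =
      if ZMod.castHom (Nat.gcd_dvd_left n x) (ZMod (n.gcd x)) s = 0 then n.gcd x else 0 := by
  have : NeZero n := ⟨hn⟩
  split_ifs with h
  · obtain ⟨y, rfl⟩ := (mul_solvable hn x s).2 h
    rw [← card_mul_ker hn x]
    exact Nat.card_congr ((AddMonoidHom.mulLeft (x : ZMod n)).fiberEquivKer y)
  · rw [Nat.card_eq_zero]
    left
    exact ⟨fun y => h ((mul_solvable hn x s).1 ⟨y.1, y.2⟩)⟩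

lemma card_pair_mul {V : Type*} [Finite V] {n : ℕ} (hn : n ≠ 0) (x : ℕ) (s : V → ZMod n) :
    Nat.card {q : V × ZMod n // x * q.2 = s q.1} =
      n.gcd x * Nat.card {v // ZMod.castHom (Nat.gcd_dvd_left n x) (ZMod (n.gcd x)) (s v) = 0} := by
  classical
  have : NeZero n := ⟨hn⟩
  have := Fintype.ofFinite V
  have e : {q : V × ZMod n // x * q.2 = s q.1} ≃ Σ v : V, {y : ZMod n // x * y = s v} :=
    ⟨fun q => ⟨q.1.1, q.1.2, q.2⟩, fun q => ⟨(q.1, q.2.1), q.2.2⟩, fun _ => rfl, fun _ => rfl⟩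
  rw [Nat.card_congr e, Nat.card_sigma]
  simp only [card_mul_eq hn]
  rw [← Finset.sum_filter, Finset.sum_const, smul_eq_mul, mul_comm, Nat.card_eq_fintype_card,
    Fintype.card_subtype]

lemma sum_gcd {n : ℕ} [NeZero n] (F : ℕ → ℕ) :
    ∑ x : ZMod n, F (n.gcd x.val) = ∑ d ∈ n.divisors, (n / d).totient * F d := by
  have h1 : ∑ x : ZMod n, F (n.gcd x.val) = ∑ i ∈ Finset.range n, F (n.gcd i) := by
    refine Finset.sum_bij' (fun x _ => x.val) (fun i _ => (i : ZMod n)) ?_ ?_ ?_ ?_ ?_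
    · intro a _; simpa using ZMod.val_lt a
    · intro a _; simp
    · intro a _; simp
    · intro a ha; exact ZMod.val_cast_of_lt (by simpa using ha)
    · intro a _; rfl
  rw [h1, ← Finset.sum_fiberwise_of_maps_to (t := n.divisors) (g := fun i => n.gcd i)]
  · refine Finset.sum_congr rfl fun d hd => ?_
    rw [Nat.totient_div_of_dvd (Nat.dvd_of_mem_divisors hd), ← smul_eq_mul, ← Finset.sum_const]
    refine Finset.sum_congr rfl fun i hi => ?_
    rw [(Finset.mem_filter.1 hi).2]
  · intro i _
    exact Nat.mem_divisors.2 ⟨Nat.gcd_dvd_left _ _, NeZero.ne n⟩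

lemma ix0 (k : ℕ) : 0 < 2 * k + 2 := by omega

lemma ix1 (k : ℕ) : 1 < 2 * k + 2 := by omega

lemma ix2 (k : ℕ) (i : Fin k) : 2 * (i : ℕ) + 2 < 2 * k + 2 := by have := i.isLt; omega

lemma ix3 (k : ℕ) (i : Fin k) : 2 * (i : ℕ) + 3 < 2 * k + 2 := by have := i.isLt; omega

/-- the quadratic form -/
def Bf (Δ : ℤ) (k : ℕ) {n : ℕ} (v : Fin (2 * k + 2) → ZMod n) : ZMod n :=
  v ⟨0, ix0 k⟩ ^ 2 - (Δ : ZMod n) * v ⟨1, ix1 k⟩ ^ 2 +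
    ∑ i : Fin k, v ⟨2 * i + 2, ix2 k i⟩ * v ⟨2 * i + 3, ix3 k i⟩

/-- the number of representations -/
noncomputable def Nc (Δ : ℤ) (k n : ℕ) (m : ℤ) : ℕ :=
  Nat.card {v : Fin (2 * k + 2) → ZMod n // Bf Δ k v = m}

lemma Bf_cast (Δ : ℤ) (k : ℕ) {n d : ℕ} (hd : d ∣ n) (v : Fin (2 * k + 2) → ZMod n) :
    ZMod.castHom hd (ZMod d) (Bf Δ k v) = Bf Δ k (fun i => ZMod.castHom hd (ZMod d) (v i)) := by
  simp only [Bf, map_add, map_sub, map_mul, map_pow, map_sum, map_intCast]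

lemma card_red_Bf (Δ : ℤ) (k : ℕ) {n d : ℕ} (hn : n ≠ 0) (hd : d ∣ n) (m : ℤ) :
    Nat.card {v : Fin (2 * k + 2) → ZMod n // ZMod.castHom hd (ZMod d) (m - Bf Δ k v) = 0}
      = (n / d) ^ (2 * k + 2) * Nc Δ k d m := by
  rw [Nc, ← card_red hn hd (2 * k + 2) (fun v => Bf Δ k v = m)]
  refine Nat.card_congr (Equiv.subtypeEquivRight fun v => ?_)
  rw [map_sub, map_intCast, Bf_cast, sub_eq_zero, eq_comm]

def splitEquiv (k n : ℕ) : (Fin (2 * (k + 1) + 2) → ZMod n) ≃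
    ZMod n × ((Fin (2 * k + 2) → ZMod n) × ZMod n) where
  toFun v := (v ⟨2 * k + 2, by omega⟩, fun i => v ⟨i, by omega⟩, v ⟨2 * k + 3, by omega⟩)
  invFun q := fun i => if h : (i : ℕ) < 2 * k + 2 then q.2.1 ⟨i, h⟩ else
    if (i : ℕ) = 2 * k + 2 then q.1 else q.2.2
  left_inv v := by
    funext i
    dsimp only
    split_ifs with h h'
    · rfl
    · congr 1; ext; exact h'.symm
    · congr 1; ext; have := i.isLt; simp only; omega
  right_inv q := by
    ext
    · simp
    · simp
    · simp

lemma Nc_succ (Δ : ℤ) (k : ℕ) {n : ℕ} (hn : n ≠ 0) (m : ℤ) :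
    Nc Δ (k + 1) n m = ∑ d ∈ n.divisors, (n / d).totient *
      (d * ((n / d) ^ (2 * k + 2) * Nc Δ k d m)) := by
  classical
  have : NeZero n := ⟨hn⟩
  have e : {v : Fin (2 * (k + 1) + 2) → ZMod n // Bf Δ (k + 1) v = m} ≃
      Σ x : ZMod n, {q : (Fin (2 * k + 2) → ZMod n) × ZMod n //
        ((x.val : ℕ) : ZMod n) * q.2 = m - Bf Δ k q.1} := by
    refine Equiv.trans (Equiv.subtypeEquiv (splitEquiv k n)
      (q := fun t => ((t.1.val : ℕ) : ZMod n) * t.2.2 = (m : ZMod n) - Bf Δ k t.2.1) ?_)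
      ⟨fun q => ⟨q.1.1, q.1.2, q.2⟩, fun q => ⟨(q.1, q.2.1), q.2.2⟩, fun _ => rfl, fun _ => rfl⟩
    intro v
    simp only [splitEquiv, Equiv.coe_fn_mk, Bf, ZMod.natCast_val, ZMod.cast_id', id_eq]
    rw [Fin.sum_univ_castSucc, eq_sub_iff_add_eq, ← add_assoc]
    simp only [Fin.val_castSucc, Fin.val_last]
    rw [add_comm]
  rw [Nc, Nat.card_congr e, Nat.card_sigma, ← sum_gcd]
  refine Finset.sum_congr rfl fun x _ => ?_
  rw [card_pair_mul hn x.val (fun v => (m : ZMod n) - Bf Δ k v), card_red_Bf Δ k hn]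

lemma Nc_succ_prime_pow (Δ : ℤ) (k : ℕ) {p : ℕ} (hp : p.Prime) (l : ℕ) (m : ℤ) :
    Nc Δ (k + 1) (p ^ l) m = ∑ ij ∈ Finset.HasAntidiagonal.antidiagonal l, (p ^ ij.1).totient *
      (p ^ ij.2 * ((p ^ ij.1) ^ (2 * k + 2) * Nc Δ k (p ^ ij.2) m)) := by
  rw [Nc_succ Δ k (pow_ne_zero _ hp.ne_zero), Nat.sum_divisors_prime_pow hp,
    ← Finset.Nat.sum_antidiagonal_swap, Finset.Nat.sum_antidiagonal_eq_sum_range_succ_mk]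
  refine Finset.sum_congr rfl fun j hj => ?_
  have : p ^ l / p ^ j = p ^ (l - j) :=
    Nat.pow_div (by simpa [Nat.lt_succ_iff] using hj) hp.pos
  simp only [this, Prod.fst_swap, Prod.snd_swap]


/-- reduction mod `p` -/
def pr (p l : ℕ) : ZMod (p ^ (l + 1)) →+* ZMod p :=
  ZMod.castHom (dvd_pow_self p (Nat.succ_ne_zero l)) (ZMod p)

lemma pr_surj (p l : ℕ) : Function.Surjective (pr p l) := ZMod.castHom_surjective _

lemma castHom_eq_zero {n d : ℕ} (hn : n ≠ 0) (hd : d ∣ n) (s : ZMod n) :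
    ZMod.castHom hd (ZMod d) s = 0 ↔ d ∣ s.val := by
  have : NeZero n := ⟨hn⟩
  conv_lhs => rw [← ZMod.natCast_zmod_val s]
  rw [map_natCast, ZMod.natCast_eq_zero_iff]

lemma pr_unit {p : ℕ} (hp : p.Prime) (l : ℕ) (x : ZMod (p ^ (l + 1))) (hx : pr p l x ≠ 0) :
    IsUnit x := by
  have hn : p ^ (l + 1) ≠ 0 := pow_ne_zero _ hp.ne_zero
  have : NeZero (p ^ (l + 1)) := ⟨hn⟩
  rw [pr, Ne, castHom_eq_zero hn] at hx
  rw [← ZMod.natCast_zmod_val x, ZMod.isUnit_iff_coprime]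
  exact ((Nat.Prime.coprime_iff_not_dvd hp).2 hx).symm.pow_right _

lemma pr_dvd {p : ℕ} (hp : p.Prime) (l : ℕ) (x : ZMod (p ^ (l + 1))) (hx : pr p l x = 0) :
    (p : ZMod (p ^ (l + 1))) ∣ x := by
  have hn : p ^ (l + 1) ≠ 0 := pow_ne_zero _ hp.ne_zero
  have : NeZero (p ^ (l + 1)) := ⟨hn⟩
  rw [pr, castHom_eq_zero hn] at hx
  obtain ⟨c, hc⟩ := hx
  exact ⟨c, by rw [← Nat.cast_mul, ← hc, ZMod.natCast_zmod_val]⟩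

lemma two_ne {p : ℕ} (hp : p.Prime) (hp2 : p ≠ 2) : (2 : ZMod p) ≠ 0 := by
  have : ((2 : ℕ) : ZMod p) ≠ 0 := by
    rw [Ne, ZMod.natCast_eq_zero_iff]
    intro h
    exact hp2 ((Nat.prime_dvd_prime_iff_eq hp Nat.prime_two).1 h)
  simpa using this

lemma card_sqrt {p : ℕ} (hp : p.Prime) (hp2 : p ≠ 2) (l : ℕ) (c : ZMod (p ^ (l + 1))) :
    Nat.card {x // pr p l x ≠ 0 ∧ x ^ 2 = c} =
      Nat.card {x : ZMod p // x ≠ 0 ∧ x ^ 2 = pr p l c} := by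
  have : Fact p.Prime := ⟨hp⟩
  let F : {x // pr p l x ≠ 0 ∧ x ^ 2 = c} → {x : ZMod p // x ≠ 0 ∧ x ^ 2 = pr p l c} :=
    fun x => ⟨pr p l x.1, x.2.1, by rw [← map_pow, x.2.2]⟩
  refine Nat.card_congr (Equiv.ofBijective F ⟨?_, ?_⟩)
  · rintro ⟨x, hx, hxc⟩ ⟨y, hy, hyc⟩ h
    have h' : pr p l x = pr p l y := congrArg Subtype.val h
    have hu : IsUnit (x + y) := by
      apply pr_unit hp
      rw [map_add, ← h', ← two_mul]
      exact mul_ne_zero (two_ne hp hp2) hx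
    have h0 : (x + y) * (x - y) = 0 := by
      have : (x + y) * (x - y) = x ^ 2 - y ^ 2 := by ring
      rw [this, hxc, hyc, sub_self]
    have := (hu.mul_right_eq_zero).1 h0
    exact Subtype.ext (sub_eq_zero.1 this)
  · rintro ⟨a, ha, hac⟩
    obtain ⟨b, rfl⟩ := pr_surj p l a
    have hd : (p : ZMod (p ^ (l + 1))) ∣ b ^ 2 - c :=
      pr_dvd hp l _ (by rw [map_sub, map_pow, hac, sub_self])
    have h1 := dvd_sub_pow_of_dvd_sub hd l
    rw [← Nat.cast_pow, ZMod.natCast_self, zero_dvd_iff, sub_eq_zero] at h1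
    have hcu : IsUnit c := pr_unit hp l c (by rw [← hac]; exact pow_ne_zero _ ha)
    obtain ⟨D, hD⟩ := hcu.exists_right_inv
    obtain ⟨t, ht⟩ := (hp.odd_of_ne_two hp2).pow (n := l)
    have hx2 : (b ^ (2 * t + 1) * D ^ t) ^ 2 = c := by
      simp only [ht] at h1
      have hDt : (c * D) ^ t = 1 := by rw [hD, one_pow]
      have h2 : (b ^ (2 * t + 1) * D ^ t) ^ 2 = (b ^ 2) ^ (2 * t + 1) * D ^ t * D ^ t := by ring
      have h3 : c ^ (2 * t + 1) * D ^ t * D ^ t = c * (c * D) ^ t * (c * D) ^ t := by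
        rw [mul_pow]; ring
      rw [h2, h1, h3, hDt, mul_one, mul_one]
    generalize b ^ (2 * t + 1) * D ^ t = x at hx2
    have hx0 : pr p l x ≠ 0 := by
      intro h0
      have : pr p l x ^ 2 = pr p l b ^ 2 := by rw [← map_pow, hx2, hac]
      rw [h0] at this
      exact ha (by simpa using this.symm)
    have hsq : pr p l x ^ 2 = pr p l b ^ 2 := by rw [← map_pow, hx2, hac]
    rcases sq_eq_sq_iff_eq_or_eq_neg.1 hsq with h | h
    · exact ⟨⟨x, hx0, hx2⟩, Subtype.ext h⟩
    · refine ⟨⟨-x, by simpa using hx0, by simpa using hx2⟩, Subtype.ext ?_⟩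
      simp only [F, map_neg, h, neg_neg]

lemma sum_red {p : ℕ} (hp : p.Prime) (l : ℕ) [NeZero p] (g : ZMod p → ℕ) :
    ∑ y : ZMod (p ^ (l + 1)), g (pr p l y) = p ^ l * ∑ y, g y := by
  classical
  have hk := card_ker (pr p l).toAddMonoidHom (pr_surj p l)
  rw [Nat.card_zmod, Nat.card_zmod] at hk
  have hk' := Nat.eq_of_mul_eq_mul_right hp.pos (hk.trans (pow_succ p l))
  rw [← Finset.sum_fiberwise_of_maps_to (t := Finset.univ) (g := fun i => pr p l i)
    (fun _ _ => Finset.mem_univ _), Finset.mul_sum]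
  refine Finset.sum_congr rfl fun h _ => ?_
  rw [Finset.sum_congr rfl (g := fun _ => g h)
    (fun i hi => by rw [(Finset.mem_filter.1 hi).2]), Finset.sum_const, smul_eq_mul]
  congr 1
  have := card_comp (pr p l).toAddMonoidHom (pr_surj p l) (fun y => y = h)
  rw [hk'] at this
  simpa [Nat.card_eq_fintype_card, Fintype.card_subtype] using this

lemma card_pairs {p : ℕ} (hp : p.Prime) (hp2 : p ≠ 2) (l : ℕ) (P : ZMod p → Prop)
    (c : ZMod (p ^ (l + 1)) → ZMod (p ^ (l + 1))) (c' : ZMod p → ZMod p)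
    (hc : ∀ y, pr p l (c y) = c' (pr p l y)) :
    Nat.card {q : ZMod (p ^ (l + 1)) × ZMod (p ^ (l + 1)) //
        P (pr p l q.2) ∧ pr p l q.1 ≠ 0 ∧ q.1 ^ 2 = c q.2} =
      p ^ l * Nat.card {q : ZMod p × ZMod p // P q.2 ∧ q.1 ≠ 0 ∧ q.1 ^ 2 = c' q.2} := by
  classical
  have : NeZero p := ⟨hp.ne_zero⟩
  have e1 : {q : ZMod (p ^ (l + 1)) × ZMod (p ^ (l + 1)) //
        P (pr p l q.2) ∧ pr p l q.1 ≠ 0 ∧ q.1 ^ 2 = c q.2} ≃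
        Σ y : ZMod (p ^ (l + 1)), {x // P (pr p l y) ∧ pr p l x ≠ 0 ∧ x ^ 2 = c y} :=
    ⟨fun q => ⟨q.1.2, q.1.1, q.2⟩, fun q => ⟨(q.2.1, q.1), q.2.2⟩, fun _ => rfl, fun _ => rfl⟩
  have e2 : {q : ZMod p × ZMod p // P q.2 ∧ q.1 ≠ 0 ∧ q.1 ^ 2 = c' q.2} ≃
        Σ y : ZMod p, {x // P y ∧ x ≠ 0 ∧ x ^ 2 = c' y} :=
    ⟨fun q => ⟨q.1.2, q.1.1, q.2⟩, fun q => ⟨(q.2.1, q.1), q.2.2⟩, fun _ => rfl, fun _ => rfl⟩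
  rw [Nat.card_congr e1, Nat.card_congr e2, Nat.card_sigma, Nat.card_sigma, ← sum_red hp l]
  refine Finset.sum_congr rfl fun y _ => ?_
  by_cases hP : P (pr p l y)
  · simp only [hP, true_and]
    rw [card_sqrt hp hp2, hc]
  · simp [hP]

lemma card_split {α : Type*} [Finite α] (P Q : α → Prop) :
    Nat.card {x // P x} = Nat.card {x // Q x ∧ P x} + Nat.card {x // ¬ Q x ∧ P x} := by
  classical
  have := Fintype.ofFinite α
  simp only [Nat.card_eq_fintype_card, Fintype.card_subtype]
  rw [← Finset.card_filter_add_card_filter_not (s := Finset.univ.filter P) Q, Finset.filter_filter,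
    Finset.filter_filter]
  simp only [and_comm]

/-- primitive solutions, lifted from `p` to `p^(l+1)` -/
lemma card_prim {p : ℕ} (hp : p.Prime) (hp2 : p ≠ 2) (Δ : ℤ) (hΔ : ¬ (p : ℤ) ∣ Δ) (l : ℕ) (m : ℤ) :
    Nat.card {q : ZMod (p ^ (l + 1)) × ZMod (p ^ (l + 1)) //
        ¬ (pr p l q.1 = 0 ∧ pr p l q.2 = 0) ∧ q.1 ^ 2 - (Δ : ZMod (p ^ (l + 1))) * q.2 ^ 2 = m} =
      p ^ l * Nat.card {q : ZMod p × ZMod p //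
        ¬ (q.1 = 0 ∧ q.2 = 0) ∧ q.1 ^ 2 - (Δ : ZMod p) * q.2 ^ 2 = m} := by
  have : Fact p.Prime := ⟨hp⟩
  have hΔ' : (Δ : ZMod p) ≠ 0 := by rwa [Ne, ZMod.intCast_zmod_eq_zero_iff_dvd]
  have hu : IsUnit (Δ : ZMod (p ^ (l + 1))) := pr_unit hp l _ (by rwa [map_intCast])
  obtain ⟨D, hD⟩ := hu.exists_right_inv
  have hD' : (Δ : ZMod p) * pr p l D = 1 := by
    rw [← map_intCast (pr p l), ← map_mul, hD, map_one]
  rw [card_split _ (fun q => pr p l q.1 = 0),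
    card_split (α := ZMod p × ZMod p) _ (fun q => q.1 = 0), mul_add]
  congr 1
  · have := card_pairs hp hp2 l (fun x => x = 0) (fun x => D * (x ^ 2 - m))
      (fun x => pr p l D * (x ^ 2 - m)) (fun y => by simp)
    refine Eq.trans ?_ (this.trans ?_)
    · refine Nat.card_congr (Equiv.subtypeEquiv (Equiv.prodComm _ _) ?_)
      rintro ⟨x, y⟩
      simp only [Equiv.prodComm_apply, Prod.swap]
      constructor
      · rintro ⟨h1, h2, h3⟩
        refine ⟨h1, fun h => h2 ⟨h1, h⟩, ?_⟩
        linear_combination -D * h3 - y ^ 2 * hD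
      · rintro ⟨h1, h2, h3⟩
        refine ⟨h1, fun h => h2 h.2, ?_⟩
        linear_combination -(Δ : ZMod (p ^ (l + 1))) * h3 - (x ^ 2 - m) * hD
    · congr 1
      refine Nat.card_congr (Equiv.subtypeEquiv (Equiv.prodComm _ _) ?_)
      rintro ⟨y, x⟩
      simp only [Equiv.prodComm_apply, Prod.swap]
      constructor
      · rintro ⟨h1, h2, h3⟩
        refine ⟨h1, fun h => h2 h.2, ?_⟩
        linear_combination -(Δ : ZMod p) * h3 - (x ^ 2 - m) * hD'
      · rintro ⟨h1, h2, h3⟩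
        refine ⟨h1, fun h => h2 ⟨h1, h⟩, ?_⟩
        linear_combination -pr p l D * h3 - y ^ 2 * hD'
  · have := card_pairs hp hp2 l (fun x => True) (fun y => m + Δ * y ^ 2)
      (fun y => m + Δ * y ^ 2) (fun y => by simp)
    refine Eq.trans ?_ (this.trans ?_)
    · refine Nat.card_congr (Equiv.subtypeEquivRight ?_)
      rintro ⟨x, y⟩
      simp only [sub_eq_iff_eq_add]
      tauto
    · congr 1
      refine Nat.card_congr (Equiv.subtypeEquivRight ?_)
      rintro ⟨x, y⟩
      simp only [sub_eq_iff_eq_add]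
      tauto

/-- binary count -/
lemma Nc_zero (Δ : ℤ) (n : ℕ) (m : ℤ) : Nc Δ 0 n m =
    Nat.card {q : ZMod n × ZMod n // q.1 ^ 2 - (Δ : ZMod n) * q.2 ^ 2 = m} := by
  refine Nat.card_congr (Equiv.subtypeEquiv (finTwoArrowEquiv _) ?_)
  intro v
  simp [Bf, finTwoArrowEquiv]

lemma sq_mul_zero {p : ℕ} (hp : p.Prime) (l : ℕ) (s : ZMod (p ^ (l + 1 + 1))) :
    (p : ZMod (p ^ (l + 1 + 1))) ^ 2 * s = 0 ↔
      ZMod.castHom (pow_dvd_pow p (by omega : l ≤ l + 1 + 1)) (ZMod (p ^ l)) s = 0 := by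
  have hn : p ^ (l + 1 + 1) ≠ 0 := pow_ne_zero _ hp.ne_zero
  have : NeZero (p ^ (l + 1 + 1)) := ⟨hn⟩
  rw [castHom_eq_zero hn]
  conv_lhs => rw [← ZMod.natCast_zmod_val s]
  rw [← Nat.cast_pow, ← Nat.cast_mul, ZMod.natCast_eq_zero_iff]
  generalize s.val = r
  rw [show p ^ (l + 1 + 1) = p ^ 2 * p ^ l by ring]
  exact Nat.mul_dvd_mul_iff_left (pow_pos hp.pos 2)

lemma card_nonprim {p : ℕ} (hp : p.Prime) (Δ : ℤ) (l : ℕ) (m : ℤ) :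
    Nat.card {q : ZMod (p ^ (l + 1 + 1)) × ZMod (p ^ (l + 1 + 1)) //
        (pr p (l + 1) q.1 = 0 ∧ pr p (l + 1) q.2 = 0) ∧
          q.1 ^ 2 - (Δ : ZMod (p ^ (l + 1 + 1))) * q.2 ^ 2 = ((p ^ 2 * m : ℤ) : ZMod (p ^ (l + 1 + 1)))} =
      p ^ 2 * Nc Δ 0 (p ^ l) m := by
  have hn : p ^ (l + 1 + 1) ≠ 0 := pow_ne_zero _ hp.ne_zero
  have : NeZero (p ^ (l + 1 + 1)) := ⟨hn⟩
  set R := ZMod (p ^ (l + 1 + 1)) with hR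
  let g1 : R →+ R := AddMonoidHom.mulLeft (p : R)
  let g : R × R →+ R × R := g1.prodMap g1
  have hk1 : Nat.card g1.ker = p := by
    have := card_mul_ker hn p
    rw [Nat.gcd_eq_right (dvd_pow_self p (Nat.succ_ne_zero _))] at this
    exact this
  have hk : Nat.card g.ker = p ^ 2 := by
    have : g.ker = g1.ker.prod g1.ker := AddMonoidHom.ker_prodMap _ _
    rw [this, Nat.card_congr (AddSubgroup.prodEquiv _ _).toEquiv, Nat.card_prod, hk1, sq]
  have hmem : ∀ q : R × R, q ∈ g.range ↔ (pr p (l + 1) q.1 = 0 ∧ pr p (l + 1) q.2 = 0) := by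
    intro q
    constructor
    · rintro ⟨t, rfl⟩
      simp [g, g1]
    · rintro ⟨h1, h2⟩
      obtain ⟨a, ha⟩ := pr_dvd hp _ _ h1
      obtain ⟨b, hb⟩ := pr_dvd hp _ _ h2
      exact ⟨(a, b), Prod.ext ha.symm hb.symm⟩
  let P : R × R → Prop := fun q => q.1 ^ 2 - (Δ : R) * q.2 ^ 2 = ((p ^ 2 * m : ℤ) : R)
  have hc : Nat.card {q : R × R // P (g q)} = Nat.card g.rangeRestrict.ker *
      Nat.card {h : g.range // P h} :=
    card_comp g.rangeRestrict g.rangeRestrict_surjective (fun h => P h.1)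
  rw [AddMonoidHom.ker_rangeRestrict, hk] at hc
  have hl : Nat.card {q : R × R // P (g q)} = (p ^ 2) ^ 2 * Nc Δ 0 (p ^ l) m := by
    have := card_red_Bf Δ 0 hn (pow_dvd_pow p (by omega : l ≤ l + 1 + 1)) m
    rw [Nat.pow_div (by omega) hp.pos, show l + 1 + 1 - l = 2 by omega] at this
    rw [← this]
    refine Nat.card_congr (Equiv.subtypeEquiv (finTwoArrowEquiv _).symm ?_)
    rintro ⟨x, y⟩
    rw [← sq_mul_zero hp]
    simp only [P, g, g1, Bf, finTwoArrowEquiv]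
    simp only [AddMonoidHom.prodMap]
    simp
    have hcast : ∀ n : ℕ, ((p ^ 2 * m : ℤ) : ZMod n) = (p : ZMod n) ^ 2 * (m : ZMod n) := by
      intro n; push_cast; rfl
    have hcast' := hcast (p ^ (l + 1 + 1))
    constructor
    · intro h; linear_combination -h - hcast'
    · intro h; linear_combination -h - hcast'
  have hr : Nat.card {h : g.range // P h} =
      Nat.card {q : R × R // (pr p (l + 1) q.1 = 0 ∧ pr p (l + 1) q.2 = 0) ∧ P q} := by
    rw [Nat.card_congr (Equiv.subtypeSubtypeEquivSubtypeInter (fun q => q ∈ g.range) P)]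
    exact Nat.card_congr (Equiv.subtypeEquivRight fun q => by rw [hmem])
  rw [hl, hr] at hc
  have h3 := Nat.eq_of_mul_eq_mul_left (pow_pos hp.pos 2)
    ((by rw [← hc]; ring : p ^ 2 * (p ^ 2 * Nc Δ 0 (p ^ l) m) = _))
  exact h3.symm

/-! counts over the prime field -/

lemma card_sq {p : ℕ} [Fact p.Prime] (hp2 : p ≠ 2) (c : ZMod p) :
    (Nat.card {x : ZMod p // x ^ 2 = c} : ℤ) = quadraticChar (ZMod p) c + 1 := by
  rw [← quadraticChar_card_sqrts (by rwa [ZMod.ringChar_zmod_n])]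
  rw [Nat.card_eq_fintype_card, Fintype.card_subtype]
  congr 2
  ext; simp

lemma Nc_p_zero {p : ℕ} [Fact p.Prime] (hp2 : p ≠ 2) (Δ : ℤ) (m : ℤ) (hm : (m : ZMod p) = 0) :
    (Nc Δ 0 p m : ℤ) = p + quadraticChar (ZMod p) Δ * (p - 1) := by
  classical
  have e : {q : ZMod p × ZMod p // q.1 ^ 2 - (Δ : ZMod p) * q.2 ^ 2 = m} ≃
      Σ y : ZMod p, {x // x ^ 2 = (Δ : ZMod p) * y ^ 2} :=
    ⟨fun q => ⟨q.1.2, q.1.1, sub_eq_zero.1 (q.2.trans hm)⟩,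
      fun q => ⟨(q.2.1, q.1), by rw [hm, sub_eq_zero]; exact q.2.2⟩, fun _ => rfl, fun _ => rfl⟩
  rw [Nc_zero, Nat.card_congr e, Nat.card_sigma]
  push_cast
  simp only [card_sq hp2, map_mul, Finset.sum_add_distrib, ← Finset.mul_sum]
  have : ∑ y : ZMod p, quadraticChar (ZMod p) (y ^ 2) = p - 1 := by
    rw [← Finset.add_sum_erase _ _ (Finset.mem_univ (0 : ZMod p))]
    rw [Finset.sum_congr rfl (g := fun _ => 1) (fun y hy =>
      quadraticChar_sq_one' (Finset.ne_of_mem_erase hy))]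
    simp [Finset.card_erase_of_mem, ZMod.card]
    rw [Nat.cast_sub (Fact.out : p.Prime).one_le]; simp
  rw [this]
  simp [ZMod.card]
  ring

lemma Nc_p_ne {p : ℕ} [Fact p.Prime] (hp2 : p ≠ 2) (Δ : ℤ) (hΔ : (Δ : ZMod p) ≠ 0)
    (m : ZMod p) (hm : m ≠ 0) :
    Nat.card {q : ZMod p × ZMod p // q.1 ^ 2 - (Δ : ZMod p) * q.2 ^ 2 = m} =
    Nat.card {q : ZMod p × ZMod p // q.1 ^ 2 - (Δ : ZMod p) * q.2 ^ 2 = 1} := by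
  obtain ⟨a, b, hab⟩ : ∃ a b : ZMod p, a ^ 2 - (Δ : ZMod p) * b ^ 2 = m := by
    obtain ⟨a, b, h⟩ := FiniteField.exists_root_sum_quadratic (R := ZMod p)
      (f := Polynomial.X ^ 2 - Polynomial.C m)
      (g := Polynomial.C (-(Δ : ZMod p)) * Polynomial.X ^ 2)
      (Polynomial.degree_X_pow_sub_C (by norm_num) _)
      (Polynomial.degree_C_mul_X_pow 2 (neg_ne_zero.2 hΔ))
      (by rw [ZMod.card]; exact Nat.odd_iff.1 ((Fact.out : p.Prime).odd_of_ne_two hp2))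
    refine ⟨a, b, ?_⟩
    simp at h
    linear_combination h
  symm
  refine Nat.card_congr ⟨fun q => ⟨(a * q.1.1 + Δ * b * q.1.2, b * q.1.1 + a * q.1.2), ?_⟩,
    fun q => ⟨((a * q.1.1 - Δ * b * q.1.2) * m⁻¹, (- b * q.1.1 + a * q.1.2) * m⁻¹), ?_⟩, ?_, ?_⟩
  · have := q.2
    simp only
    rw [← hab]
    linear_combination (a ^ 2 - (Δ : ZMod p) * b ^ 2) * this
  · have := q.2
    simp only
    have hmm : m * m⁻¹ = 1 := mul_inv_cancel₀ hm
    linear_combination (m⁻¹) ^ 2 * (a ^ 2 - (Δ : ZMod p) * b ^ 2) * this + (m⁻¹) ^ 2 * m * hab +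
      (m * m⁻¹ + 1) * hmm
  · rintro ⟨⟨x, y⟩, h⟩
    have hmm : m * m⁻¹ = 1 := mul_inv_cancel₀ hm
    ext
    · simp only
      linear_combination x * m⁻¹ * hab + x * hmm
    · simp only
      linear_combination y * m⁻¹ * hab + y * hmm
  · rintro ⟨⟨x, y⟩, h⟩
    have hmm : m * m⁻¹ = 1 := mul_inv_cancel₀ hm
    ext
    · simp only
      linear_combination x * m⁻¹ * hab + x * hmm
    · simp only
      linear_combination y * m⁻¹ * hab + y * hmm

lemma Nc_p_one {p : ℕ} [Fact p.Prime] (hp2 : p ≠ 2) (Δ : ℤ) (hΔ : (Δ : ZMod p) ≠ 0) :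
    (Nc Δ 0 p 1 : ℤ) = p - quadraticChar (ZMod p) Δ := by
  classical
  have hp : p.Prime := Fact.out
  have h0 := Nc_p_zero hp2 Δ 0 (by simp)
  rw [Nc_zero] at h0 ⊢
  have htot : Nat.card (ZMod p × ZMod p) = ∑ m : ZMod p,
      Nat.card {q : ZMod p × ZMod p // q.1 ^ 2 - (Δ : ZMod p) * q.2 ^ 2 = m} := by
    rw [← Nat.card_sigma]
    exact Nat.card_congr (Equiv.sigmaFiberEquiv _).symm
  rw [← Finset.add_sum_erase _ _ (Finset.mem_univ (0 : ZMod p)),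
    Finset.sum_congr rfl (fun m hm => Nc_p_ne hp2 Δ hΔ m (Finset.ne_of_mem_erase hm)),
    Finset.sum_const, Nat.card_prod, Nat.card_zmod, Finset.card_erase_of_mem (Finset.mem_univ _),
    Finset.card_univ, ZMod.card] at htot
  simp only [Int.cast_zero, Int.cast_one] at h0 ⊢
  zify at htot
  rw [h0, smul_eq_mul, Nat.cast_mul, Nat.cast_sub hp.one_le] at htot
  have hp1 : (p : ℤ) - 1 ≠ 0 := by have := hp.one_lt; omega
  apply mul_left_cancel₀ hp1
  push_cast at htot
  linear_combination -htot

lemma prim_p {p : ℕ} [Fact p.Prime] (Δ : ℤ) (m : ℤ) (hm : (m : ZMod p) = 0) :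
    Nc Δ 0 p m = 1 + Nat.card {q : ZMod p × ZMod p //
        ¬ (q.1 = 0 ∧ q.2 = 0) ∧ q.1 ^ 2 - (Δ : ZMod p) * q.2 ^ 2 = m} := by
  rw [Nc_zero, card_split _ (fun q : ZMod p × ZMod p => q.1 = 0 ∧ q.2 = 0)]
  congr 1
  rw [Nat.card_eq_one_iff_unique]
  refine ⟨⟨?_⟩, ⟨⟨(0, 0), by simp [hm]⟩⟩⟩
  rintro ⟨⟨x, y⟩, ⟨h1, h2⟩, h3⟩ ⟨⟨x', y'⟩, ⟨h1', h2'⟩, h3'⟩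
  simp only at h1 h2 h1' h2'
  subst h1 h2 h1' h2'
  rfl

lemma Nc_zero_succ_succ {p : ℕ} [Fact p.Prime] (hp2 : p ≠ 2) (Δ : ℤ) (hΔ : ¬ (p : ℤ) ∣ Δ)
    (l : ℕ) (m : ℤ) :
    (Nc Δ 0 (p ^ (l + 2)) (p ^ 2 * m) : ℤ) =
      p ^ (l + 1) * ((1 + quadraticChar (ZMod p) Δ) * (p - 1)) + p ^ 2 * Nc Δ 0 (p ^ l) m := by
  have hp : p.Prime := Fact.out
  have hm : ((p ^ 2 * m : ℤ) : ZMod p) = 0 := by simp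
  have h1 := prim_p Δ (p ^ 2 * m) hm
  have h2 := Nc_p_zero hp2 Δ (p ^ 2 * m) hm
  have h3 := card_prim hp hp2 Δ hΔ (l + 1) (p ^ 2 * m)
  have h4 := card_nonprim hp Δ l m
  have h5 := card_split (fun q : ZMod (p ^ (l + 1 + 1)) × ZMod (p ^ (l + 1 + 1)) =>
    q.1 ^ 2 - (Δ : ZMod (p ^ (l + 1 + 1))) * q.2 ^ 2 = ((p ^ 2 * m : ℤ) : ZMod (p ^ (l + 1 + 1))))
    (fun q => pr p (l + 1) q.1 = 0 ∧ pr p (l + 1) q.2 = 0)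
  rw [← Nc_zero, h3, h4] at h5
  rw [h1] at h2
  push_cast at h2
  rw [show l + 2 = l + 1 + 1 from rfl, h5]
  push_cast
  linear_combination (p : ℤ) ^ (l + 1) * h2

lemma Nc_zero_one {p : ℕ} [Fact p.Prime] (hp2 : p ≠ 2) (Δ : ℤ) (hΔ : ¬ (p : ℤ) ∣ Δ) (l : ℕ) :
    (Nc Δ 0 (p ^ (l + 1)) 1 : ℤ) = p ^ l * (p - quadraticChar (ZMod p) Δ) := by
  have hp : p.Prime := Fact.out
  have hΔ' : (Δ : ZMod p) ≠ 0 := by rwa [Ne, ZMod.intCast_zmod_eq_zero_iff_dvd]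
  rw [← Nc_p_one hp2 Δ hΔ', Nc_zero, Nc_zero,
    card_split _ (fun q : ZMod p × ZMod p => q.1 = 0 ∧ q.2 = 0),
    card_split _ (fun q : ZMod (p ^ (l + 1)) × ZMod (p ^ (l + 1)) => pr p l q.1 = 0 ∧ pr p l q.2 = 0),
    card_prim hp hp2 Δ hΔ]
  have z1 : Nat.card {q : ZMod p × ZMod p // (q.1 = 0 ∧ q.2 = 0) ∧
      q.1 ^ 2 - (Δ : ZMod p) * q.2 ^ 2 = ((1 : ℤ) : ZMod p)} = 0 := by
    rw [Nat.card_eq_zero]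
    left
    refine ⟨?_⟩
    rintro ⟨⟨x, y⟩, ⟨h1, h2⟩, h3⟩
    simp only at h1 h2
    subst h1 h2
    simp at h3
  have z2 : Nat.card {q : ZMod (p ^ (l + 1)) × ZMod (p ^ (l + 1)) //
      (pr p l q.1 = 0 ∧ pr p l q.2 = 0) ∧
      q.1 ^ 2 - (Δ : ZMod (p ^ (l + 1))) * q.2 ^ 2 = ((1 : ℤ) : ZMod (p ^ (l + 1)))} = 0 := by
    rw [Nat.card_eq_zero]
    left
    refine ⟨?_⟩
    rintro ⟨⟨x, y⟩, ⟨h1, h2⟩, h3⟩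
    simp only at h1 h2
    have := congrArg (pr p l) h3
    simp [h1, h2] at this
  rw [z1, z2]
  push_cast
  ring

lemma Nc_one (Δ : ℤ) (k : ℕ) (m : ℤ) : Nc Δ k 1 m = 1 := by
  rw [Nc, Nat.card_eq_one_iff_unique]
  exact ⟨inferInstance, ⟨⟨0, Subsingleton.elim (α := Fin 1) _ _⟩⟩⟩

lemma Nc_le (Δ : ℤ) (k : ℕ) {n : ℕ} (hn : n ≠ 0) (m : ℤ) : Nc Δ k n m ≤ n ^ (2 * k + 2) := by
  have : NeZero n := ⟨hn⟩
  have h := Nat.card_le_card_of_injective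
    (fun v : {v : Fin (2 * k + 2) → ZMod n // Bf Δ k v = m} => v.1) Subtype.val_injective
  simpa [Nc] using h

/-! generating series -/

lemma hs_congr {f g : ℕ → ℝ} {a b : ℝ} (h : HasSum g b) (hf : ∀ n, f n = g n) (hab : a = b) :
    HasSum f a := by
  have e : f = g := funext hf
  rw [hab, e]
  exact h


noncomputable def uu (p : ℕ) (Δ : ℤ) (k T l : ℕ) : ℝ :=
  (Nc Δ k (p ^ l) ((p ^ (2 * T) : ℕ) : ℤ) : ℝ) / p ^ ((2 * k + 2) * l)

noncomputable def ff (p : ℕ) (Δ : ℤ) (k T : ℕ) (z : ℝ) : ℝ := ∑' l, z ^ l * uu p Δ k T l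

lemma uu_nonneg (p : ℕ) (Δ : ℤ) (k T l : ℕ) : 0 ≤ uu p Δ k T l := by unfold uu; positivity

lemma uu_le {p : ℕ} (hp : p.Prime) (Δ : ℤ) (k T l : ℕ) : uu p Δ k T l ≤ 1 := by
  unfold uu
  have hp0 : (0 : ℝ) < p := by exact_mod_cast hp.pos
  rw [div_le_one (by positivity)]
  have := Nc_le Δ k (pow_ne_zero l hp.ne_zero) ((p ^ (2 * T) : ℕ) : ℤ)
  rw [← pow_mul, mul_comm l] at this
  exact_mod_cast this

lemma summable_norm {p : ℕ} (hp : p.Prime) (Δ : ℤ) (k T : ℕ) {z : ℝ} (hz : |z| < 1) :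
    Summable (fun l => ‖z ^ l * uu p Δ k T l‖) := by
  refine Summable.of_nonneg_of_le (fun _ => norm_nonneg _) (fun l => ?_)
    (summable_geometric_of_lt_one (abs_nonneg z) hz)
  rw [norm_mul, norm_pow, Real.norm_eq_abs, Real.norm_eq_abs, abs_of_nonneg (uu_nonneg _ _ _ _ _)]
  exact mul_le_of_le_one_right (by positivity) (uu_le hp _ _ _ _)

lemma summable_uu {p : ℕ} (hp : p.Prime) (Δ : ℤ) (k T : ℕ) {z : ℝ} (hz : |z| < 1) :
    Summable (fun l => z ^ l * uu p Δ k T l) := (summable_norm hp Δ k T hz).of_norm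

lemma summable_double {p : ℕ} (hp : p.Prime) (Δ : ℤ) (k : ℕ) {a z : ℝ} (ha : |a| < 1)
    (hz : |z| < 1) :
    Summable (fun q : ℕ × ℕ => a ^ q.1 * (z ^ q.2 * uu p Δ k q.1 q.2)) := by
  refine Summable.of_norm_bounded (g := fun q : ℕ × ℕ => |a| ^ q.1 * |z| ^ q.2) ?_ ?_
  · exact (summable_geometric_of_lt_one (abs_nonneg a) ha).mul_of_nonneg
      (summable_geometric_of_lt_one (abs_nonneg z) hz) (fun _ => by positivity)
      (fun _ => by positivity)
  · intro q
    rw [norm_mul, norm_mul, norm_pow, norm_pow, Real.norm_eq_abs, Real.norm_eq_abs,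
      Real.norm_eq_abs, abs_of_nonneg (uu_nonneg _ _ _ _ _)]
    gcongr
    exact mul_le_of_le_one_right (by positivity) (uu_le hp _ _ _ _)

lemma abs_div_lt {p : ℕ} (hp : p.Prime) {z : ℝ} (hz : |z| < 1) : |z / p| < 1 := by
  have hp1 : (1 : ℝ) < p := by exact_mod_cast hp.one_lt
  rw [abs_div, Nat.abs_cast, div_lt_one (by linarith)]
  linarith

lemma hasSum_totient {p : ℕ} (hp : p.Prime) {z : ℝ} (hz : |z| < 1) :
    HasSum (fun i : ℕ => ((p ^ i).totient : ℝ) * (z / p ^ 2) ^ i) ((1 - z / p ^ 2) / (1 - z / p)) := by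
  have hp0 : (p : ℝ) ≠ 0 := by exact_mod_cast hp.ne_zero
  have hzp := abs_div_lt hp hz
  have h1 : (1 - z / p : ℝ) ≠ 0 := by
    have := (abs_lt.1 hzp).2; intro h; linarith
  have h1' : (p - z : ℝ) ≠ 0 := by
    intro h; apply h1; rw [sub_eq_zero.1 h |>.symm, div_self hp0, sub_self]
  have hg := (hasSum_geometric_of_abs_lt_one hzp).mul_left ((p - 1) * (z / p ^ 2))
  rw [← hasSum_nat_add_iff' 1]
  refine hs_congr hg ?_ ?_
  · intro i
    rw [Nat.totient_prime_pow_succ hp]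
    push_cast [hp.one_le]
    rw [pow_succ, div_pow, div_pow]
    field_simp
    ring
  · simp
    field_simp
    ring

lemma ff_succ {p : ℕ} (hp : p.Prime) (Δ : ℤ) (k T : ℕ) {z : ℝ} (hz : |z| < 1) :
    ff p Δ (k + 1) T z = (1 - z / p ^ 2) / (1 - z / p) * ff p Δ k T (z / p) := by
  have hp0 : (p : ℝ) ≠ 0 := by exact_mod_cast hp.ne_zero
  have ht := hasSum_totient hp hz
  have hzp := abs_div_lt hp hz
  rw [ff, ff, ← ht.tsum_eq, tsum_mul_tsum_eq_tsum_sum_antidiagonal_of_summable_norm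
    ht.summable.norm (summable_norm hp Δ k T hzp)]
  refine tsum_congr fun l => ?_
  rw [uu, Nc_succ_prime_pow Δ k hp]
  push_cast
  rw [Finset.sum_div, Finset.mul_sum]
  refine Finset.sum_congr rfl fun ij hij => ?_
  obtain ⟨i, j⟩ := ij
  have : i + j = l := by simpa using hij
  subst this
  simp only [uu]
  push_cast
  have e1 : (p : ℝ) ^ ((2 * (k + 1) + 2) * (i + j)) =
      (p ^ i) ^ (2 * k + 2) * (p ^ 2) ^ i * (p ^ ((2 * k + 2) * j) * p ^ j * p ^ j) := by
    ring
  rw [e1, div_pow, div_pow, pow_add]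
  field_simp

lemma ff_zero_zero {p : ℕ} [Fact p.Prime] (hp2 : p ≠ 2) (Δ : ℤ) (hΔ : ¬ (p : ℤ) ∣ Δ) (ε : ℝ)
    (hε : ((quadraticChar (ZMod p) Δ : ℤ) : ℝ) = ε) {z : ℝ} (hz : |z| < 1) :
    ff p Δ 0 0 z = (1 - ε * z / p ^ 2) / (1 - z / p) := by
  have hp : p.Prime := Fact.out
  have hp0 : (p : ℝ) ≠ 0 := by exact_mod_cast hp.ne_zero
  have hzp := abs_div_lt hp hz
  have h1 : (1 - z / p : ℝ) ≠ 0 := by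
    have := (abs_lt.1 hzp).2; intro h; linarith
  have h1' : (p - z : ℝ) ≠ 0 := by
    intro h; apply h1; rw [sub_eq_zero.1 h |>.symm, div_self hp0, sub_self]
  have hg := (hasSum_geometric_of_abs_lt_one hzp).mul_left ((p - ε) / p * (z / p))
  refine HasSum.tsum_eq ?_
  rw [← hasSum_nat_add_iff' 1]
  refine hs_congr hg ?_ ?_
  · intro l
    have h := Nc_zero_one hp2 Δ hΔ l
    have h' : (Nc Δ 0 (p ^ (l + 1)) 1 : ℝ) = p ^ l * (p - ε) := by
      rw [← hε]; exact_mod_cast h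
    simp only [uu, mul_zero, pow_zero, Nat.cast_one, h']
    rw [div_pow]
    have e1 : (p : ℝ) ^ ((0 + 2) * (l + 1)) = p ^ l * p ^ l * p ^ 2 := by ring
    rw [e1, pow_succ]
    field_simp
  · simp [uu, Nc_one]
    field_simp
    ring

lemma ff_zero_succ {p : ℕ} [Fact p.Prime] (hp2 : p ≠ 2) (Δ : ℤ) (hΔ : ¬ (p : ℤ) ∣ Δ) (ε : ℝ)
    (hε : ((quadraticChar (ZMod p) Δ : ℤ) : ℝ) = ε) {z : ℝ} (hz : |z| < 1) (T : ℕ) :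
    ff p Δ 0 (T + 1) z = (1 + z / p ^ 2 + (1 + ε) * (1 - 1 / p) * (z / p) / (1 - z / p)) +
      (z / p) ^ 2 * ff p Δ 0 T z := by
  have hp : p.Prime := Fact.out
  have hp0 : (p : ℝ) ≠ 0 := by exact_mod_cast hp.ne_zero
  have hzp := abs_div_lt hp hz
  have h1 : (1 - z / p : ℝ) ≠ 0 := by
    have := (abs_lt.1 hzp).2; intro h; linarith
  have h1' : (p - z : ℝ) ≠ 0 := by
    intro h; apply h1; rw [sub_eq_zero.1 h |>.symm, div_self hp0, sub_self]
  have hg := (hasSum_geometric_of_abs_lt_one hzp).mul_left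
    ((z / p) ^ 2 * (1 + ε) * (p - 1) / p)
  have hs := (summable_uu hp Δ 0 T hz).hasSum.mul_left ((z / p) ^ 2)
  refine HasSum.tsum_eq ?_
  rw [← hasSum_nat_add_iff' 2]
  refine hs_congr (hg.add hs) ?_ ?_
  · intro l
    have h := Nc_zero_succ_succ hp2 Δ hΔ l (p ^ (2 * T))
    have h' : (Nc Δ 0 (p ^ (l + 2)) ((p ^ (2 * (T + 1)) : ℕ) : ℤ) : ℝ) =
        p ^ (l + 1) * ((1 + ε) * (p - 1)) +
          p ^ 2 * (Nc Δ 0 (p ^ l) ((p ^ (2 * T) : ℕ) : ℤ) : ℝ) := by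
      rw [← hε]
      rw [show (((p ^ (2 * (T + 1)) : ℕ)) : ℤ) = (p : ℤ) ^ 2 * p ^ (2 * T) by push_cast; ring,
        show (((p ^ (2 * T) : ℕ)) : ℤ) = (p : ℤ) ^ (2 * T) by push_cast; ring]
      exact_mod_cast h
    simp only [uu, h']
    rw [div_pow, div_pow]
    have e1 : (p : ℝ) ^ ((2 * 0 + 2) * (l + 2)) = p ^ l * p ^ l * p ^ 4 := by ring
    have e2 : (p : ℝ) ^ ((2 * 0 + 2) * l) = p ^ l * p ^ l := by ring
    rw [e1, e2, pow_succ, pow_add]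
    field_simp
    ring
  · have h2 := Nc_p_zero hp2 Δ ((p ^ (2 * (T + 1)) : ℕ) : ℤ) (by simp)
    have h2' : (Nc Δ 0 p ((p ^ (2 * (T + 1)) : ℕ) : ℤ) : ℝ) = p + ε * (p - 1) := by
      rw [← hε]; exact_mod_cast h2
    have h3 : uu p Δ 0 (T + 1) 0 = 1 := by simp [uu, Nc_one]
    have h4 : uu p Δ 0 (T + 1) 1 = (p + ε * (p - 1)) / p ^ 2 := by
      rw [uu, pow_one, h2']
    rw [Finset.sum_range_succ, Finset.sum_range_one, h3, h4, ff]
    field_simp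
    ring

lemma hasSum_base {p : ℕ} [Fact p.Prime] (hp2 : p ≠ 2) (Δ : ℤ) (hΔ : ¬ (p : ℤ) ∣ Δ) (ε : ℝ)
    (hε : ((quadraticChar (ZMod p) Δ : ℤ) : ℝ) = ε) (hε' : ε = 1 ∨ ε = -1)
    {a z : ℝ} (ha : |a| < 1) (hz : |z| < 1) :
    HasSum (fun T => a ^ T * ff p Δ 0 T z)
      ((1 - ε * (z / p) / p) * (1 - a ^ 2 * (z / p) ^ 2)
        / ((1 - z / p) * (1 - a) * (1 - a * (z / p) ^ 2) * (1 - ε * a * (z / p)))) := by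
  have hp : p.Prime := Fact.out
  have hp0 : (p : ℝ) ≠ 0 := by exact_mod_cast hp.ne_zero
  have hsm : Summable (fun T => a ^ T * ff p Δ 0 T z) := by
    have := (summable_double hp Δ 0 ha hz).prod
    refine this.congr fun T => ?_
    rw [ff, ← tsum_mul_left]
  have hzp := abs_div_lt hp hz
  have e0 := ff_zero_zero hp2 Δ hΔ ε hε hz
  have es := ff_zero_succ hp2 Δ hΔ ε hε hz
  obtain ⟨S, hS⟩ := hsm
  have hg := (hasSum_geometric_of_abs_lt_one ha).mul_left
    (a * (1 + z / p ^ 2 + (1 + ε) * (1 - 1 / p) * (z / p) / (1 - z / p)))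
  have h2 := hg.add (hS.mul_left (a * (z / p) ^ 2))
  have h3 := (hasSum_nat_add_iff' 1).2 hS
  have h4 := h3.unique (by
    refine hs_congr h2 ?_ rfl
    intro T
    rw [es]; ring)
  rw [Finset.sum_range_one, e0] at h4
  refine hs_congr hS (fun _ => rfl) ?_
  have hw2 : (z / p) ^ 2 < 1 := (sq_lt_one_iff_abs_lt_one _).2 hzp
  have hw0 := sq_nonneg (z / p)
  have ha1 := abs_lt.1 ha
  have hw1 := abs_lt.1 hzp
  have haw : |a * (z / p)| < 1 := by
    rw [abs_mul]; nlinarith [abs_nonneg a, abs_nonneg (z / p)]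
  have haw' := abs_lt.1 haw
  have n1 : 1 - z / p ≠ 0 := by intro h; linarith
  have n2 : 1 - a ≠ 0 := by intro h; linarith
  have n3 : 1 - a * (z / p) ^ 2 ≠ 0 := by intro h; nlinarith
  have n4 : 1 - ε * a * (z / p) ≠ 0 := by
    rcases hε' with h | h <;> subst h <;> intro h <;> linarith
  have e1 : z / (p : ℝ) ^ 2 = (z / p) / p := by field_simp
  have e2 : ε * z / (p : ℝ) ^ 2 = ε * (z / p) / p := by field_simp
  rw [e1, e2] at h4
  generalize z / (p : ℝ) = w at *
  have hS2 : S = ((1 - ε * w / p) / (1 - w) + a * (1 + w / p + (1 + ε) * (1 - 1 / p) * w / (1 - w))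
      * (1 - a)⁻¹) / (1 - a * w ^ 2) := by
    rw [eq_div_iff n3]
    linear_combination h4
  rw [hS2]
  clear h4 hS2 hε e0 es hg h2 h3 hS e1 e2
  have n6 : 1 - w ^ 2 * a ≠ 0 := by rwa [mul_comm]
  rcases hε' with rfl | rfl
  · have n5 : 1 - a * w ≠ 0 := by intro h; apply n4; linarith
    have n7 : 1 - w * a ≠ 0 := by rwa [mul_comm]
    rw [show (1 : ℝ) - 1 * a * w = 1 - a * w by ring]
    field_simp
    ring
  · have n5 : 1 + a * w ≠ 0 := by intro h; apply n4; linarith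
    have n7 : 1 + w * a ≠ 0 := by rwa [mul_comm]
    rw [show (1 : ℝ) - (-1) * a * w = 1 + a * w by ring]
    field_simp
    ring

lemma hasSum_ff {p : ℕ} [Fact p.Prime] (hp2 : p ≠ 2) (Δ : ℤ) (hΔ : ¬ (p : ℤ) ∣ Δ) (ε : ℝ)
    (hε : ((quadraticChar (ZMod p) Δ : ℤ) : ℝ) = ε) (hε' : ε = 1 ∨ ε = -1)
    {a : ℝ} (ha : |a| < 1) (k : ℕ) : ∀ {z : ℝ}, |z| < 1 → 
    HasSum (fun T => a ^ T * ff p Δ k T z)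
      ((1 - ε * (z / p ^ (k + 1)) / p) * (1 - a ^ 2 * (z / p ^ (k + 1)) ^ 2)
        / ((1 - z / p) * (1 - a) * (1 - a * (z / p ^ (k + 1)) ^ 2) *
          (1 - ε * a * (z / p ^ (k + 1))))) := by
  have hp : p.Prime := Fact.out
  have hp0 : (p : ℝ) ≠ 0 := by exact_mod_cast hp.ne_zero
  induction k with
  | zero => intro z hz; simpa using hasSum_base hp2 Δ hΔ ε hε hε' ha hz
  | succ k ih =>
    intro z hz
    have hzp := abs_div_lt hp hz
    have hzpp := abs_div_lt hp hzp
    have h := (ih hzp).mul_left ((1 - z / p ^ 2) / (1 - z / p))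
    have e1 : z / p / (p : ℝ) ^ (k + 1) = z / p ^ (k + 1 + 1) := by
      rw [div_div, ← pow_succ']
    have e2 : z / (p : ℝ) ^ 2 = z / p / p := by rw [div_div, sq]
    refine hs_congr h ?_ ?_
    · intro T
      rw [ff_succ hp Δ k T hz]; ring
    · rw [e1, e2]
      have n : 1 - z / p / p ≠ 0 := by
        have := (abs_lt.1 hzpp).2; intro h; linarith
      generalize z / (p : ℝ) ^ (k + 1 + 1) = w
      generalize 1 - z / p / p = x at *
      rw [div_mul_div_comm]
      rw [show (1 - z / ↑p) * (x * (1 - a) * (1 - a * w ^ 2) * (1 - ε * a * w)) =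
        x * ((1 - z / ↑p) * (1 - a) * (1 - a * w ^ 2) * (1 - ε * a * w)) by ring,
        mul_div_mul_left _ _ n]

end S17

open Classical in
theorem stmt_17 (p : ℕ) (hp : p.Prime) (hp2 : p ≠ 2) (Δ : ℤ) (hΔ : ¬ (p : ℤ) ∣ Δ)
    (ε : ℝ) (hε : ε = if IsSquare (Δ : ZMod p) then 1 else -1) (k : ℕ)
    (a z : ℝ) (ha : |a| < 1) (hz : |z| < 1) (w : ℝ) (hw : w = z / p ^ (k + 1)) :
    HasSum
      (fun Tℓ : ℕ × ℕ => a ^ Tℓ.1 * z ^ Tℓ.2 *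
        ((Nat.card {v : Fin (2 * k + 2) → ZMod (p ^ Tℓ.2) //
            v ⟨0, by omega⟩ ^ 2 - (Δ : ZMod (p ^ Tℓ.2)) * v ⟨1, by omega⟩ ^ 2 +
              ∑ i : Fin k, v ⟨2 * i + 2, by have := i.isLt; omega⟩ *
                v ⟨2 * i + 3, by have := i.isLt; omega⟩
              = ((p ^ (2 * Tℓ.1) : ℕ) : ZMod (p ^ Tℓ.2))} : ℝ)
          / p ^ ((2 * k + 2) * Tℓ.2)))
      ((1 - ε * w / p) * (1 - a ^ 2 * w ^ 2)
        / ((1 - z / p) * (1 - a) * (1 - a * w ^ 2) * (1 - ε * a * w))) := by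
  have : Fact p.Prime := ⟨hp⟩
  have hΔ' : (Δ : ZMod p) ≠ 0 := by rwa [Ne, ZMod.intCast_zmod_eq_zero_iff_dvd]
  have hχ : ((quadraticChar (ZMod p) Δ : ℤ) : ℝ) = ε := by
    rw [hε]
    split_ifs with h
    · rw [(quadraticChar_one_iff_isSquare hΔ').2 h]; simp
    · rw [quadraticChar_neg_one_iff_not_isSquare.2 h]; simp
  have hε' : ε = 1 ∨ ε = -1 := by rw [hε]; split_ifs <;> simp
  have hs := S17.summable_double hp Δ k ha hz
  have h1 := S17.hasSum_ff hp2 Δ hΔ ε hχ hε' ha k hz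
  have h2 := hs.hasSum.prod_fiberwise
    (g := fun T => a ^ T * S17.ff p Δ k T z)
    (fun T => ((S17.summable_uu hp Δ k T hz).hasSum.mul_left (a ^ T)))
  have h3 := hs.hasSum
  rw [h2.unique h1, ← hw] at h3
  refine h3.congr_fun ?_
  intro q
  rw [← mul_assoc]
  simp only [S17.uu, S17.Nc, S17.Bf, Int.cast_natCast]
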